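/- Multiprover parallel repetition for sub-nonsignalling strategies: let G = (P_{X_M}, ω) be an m-prover game with ρ_SNS(G) < 1. For any ν with 0 < ν ≤ 1 − ρ_SNS(G) and any Δ ≥ ρ_SNS(G) + ν, the probability under any sub-nonsignalling strategy of winning at least nΔ out of n parallel games is at most exp(−n·ν²/C_m), where C_m = (2 ln 2)(2(2^{m+1}−3)+1)² depends only on m. (This may be proved assuming the tensorization lemma η_NS(Gⁿ, nδ) = n·η_NS(G,δ) and the approximation lemma η_NS(G,δ) ≤ ρ_SNS(G) + C'_m√((2 ln 2)δ).) -/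

import Mathlib

open Finset

/-- A probability mass function on a finite set. -/
def IsPmf {α : Type*} [Fintype α] (P : α → ℝ) : Prop :=
  (∀ x, 0 ≤ P x) ∧ ∑ x, P x = 1

/-- Marginal (pushforward) of a measure `P` along a map `f`. -/
noncomputable def marg {α β : Type*} [Fintype α] [DecidableEq β]
    (f : α → β) (P : α → ℝ) : β → ℝ :=
  fun y => ∑ x, if f x = y then P x else 0

/-- KL divergence in bits, with the convention `0 · log 0 = 0` (and `x/0 = 0`). -/
noncomputable def klDiv {α : Type*} [Fintype α] (Q P : α → ℝ) : ℝ :=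
  ∑ x, Q x * Real.logb 2 (Q x / P x)

/-- Conditional mutual information `I(a(Z) ∧ b(Z) | c(Z))` in bits, for `Z ∼ T`. -/
noncomputable def condMI {γ α β σ : Type*} [Fintype γ]
    [Fintype α] [Fintype β] [Fintype σ] [DecidableEq α] [DecidableEq β] [DecidableEq σ]
    (T : γ → ℝ) (a : γ → α) (b : γ → β) (c : γ → σ) : ℝ :=
  ∑ z, T z * Real.logb 2
    ((marg (fun w => (a w, b w, c w)) T (a z, b z, c z) * marg c T (c z)) /
     (marg (fun w => (a w, c w)) T (a z, c z) * marg (fun w => (b w, c w)) T (b z, c z)))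

/-- Total variation distance. -/
noncomputable def dvar {α : Type*} [Fintype α] (P Q : α → ℝ) : ℝ :=
  (1/2 : ℝ) * ∑ x, |P x - Q x|

/-- `δ`-approximate nonsignalling distribution: for every proper subset `A ⊊ M` of
provers, `I(Ũ_A ∧ X̃_{A^c} | X̃_A) + D(P̃_{X_M} ‖ P_{X_M}) ≤ δ`. -/
def ApproxNS {ι : Type*} [Fintype ι] [DecidableEq ι] {X U : ι → Type*}
    [∀ i, Fintype (X i)] [∀ i, DecidableEq (X i)]
    [∀ i, Fintype (U i)] [∀ i, DecidableEq (U i)]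
    (PX : (∀ i, X i) → ℝ) (Pt : ((∀ i, U i) × (∀ i, X i)) → ℝ) (δ : ℝ) : Prop :=
  ∀ A : Finset ι, A ≠ Finset.univ →
    condMI Pt (fun z => fun i : {j // j ∈ A} => z.1 i.1)
              (fun z => fun i : {j // j ∉ A} => z.2 i.1)
              (fun z => fun i : {j // j ∈ A} => z.2 i.1)
      + klDiv (marg Prod.snd Pt) PX ≤ δ

/-- The set of expected payoffs achievable by `δ`-approximate nonsignalling
distributions; its supremum is `η_NS(G, δ)`. -/
def etaSet {ι : Type*} [Fintype ι] [DecidableEq ι] (X U : ι → Type*)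
    [∀ i, Fintype (X i)] [∀ i, DecidableEq (X i)]
    [∀ i, Fintype (U i)] [∀ i, DecidableEq (U i)]
    (PX : (∀ i, X i) → ℝ) (ω : (∀ i, X i) → (∀ i, U i) → ℝ) (δ : ℝ) : Set ℝ :=
  {E | ∃ Pt : ((∀ i, U i) × (∀ i, X i)) → ℝ,
    IsPmf Pt ∧ ApproxNS PX Pt δ ∧ E = ∑ z, Pt z * ω z.2 z.1}

/-- A sub-nonsignalling (subnormalized) strategy: for each proper subset `A` of the
provers there is a channel `Q_{U_A|X_A}` dominating the marginal `P_{U_A|X_M}`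
pointwise. -/
def IsSNS {ι : Type*} [Fintype ι] [DecidableEq ι] {X U : ι → Type*}
    [∀ i, Fintype (X i)] [∀ i, DecidableEq (X i)]
    [∀ i, Fintype (U i)] [∀ i, DecidableEq (U i)]
    (K : (∀ i, X i) → (∀ i, U i) → ℝ) : Prop :=
  (∀ x u, 0 ≤ K x u) ∧ (∀ x, ∑ u, K x u ≤ 1) ∧
  ∀ A : Finset ι, A ≠ Finset.univ →
    ∃ Q : (∀ i : {j // j ∈ A}, X i.1) → (∀ i : {j // j ∈ A}, U i.1) → ℝ,
      (∀ xA, IsPmf (Q xA)) ∧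
      ∀ x uA, marg (fun u => fun i : {j // j ∈ A} => u i.1) (K x) uA
                ≤ Q (fun i => x i.1) uA

/-- The set of expected payoffs achievable by sub-nonsignalling strategies;
its supremum is `ρ_SNS(G)`. -/
def snsSet {ι : Type*} [Fintype ι] [DecidableEq ι] (X U : ι → Type*)
    [∀ i, Fintype (X i)] [∀ i, DecidableEq (X i)]
    [∀ i, Fintype (U i)] [∀ i, DecidableEq (U i)]
    (PX : (∀ i, X i) → ℝ) (ω : (∀ i, X i) → (∀ i, U i) → ℝ) : Set ℝ :=
  {E | ∃ K : (∀ i, X i) → (∀ i, U i) → ℝ,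
    IsSNS K ∧ E = ∑ x, PX x * ∑ u, K x u * ω x u}

section Marginals

variable {α β : Type*} [Fintype α] [DecidableEq β]

theorem sum_marg_mul [Fintype β] (f : α → β) (P : α → ℝ) (g : β → ℝ) :
    ∑ y, marg f P y * g y = ∑ x, P x * g (f x) := by
  simp only [marg, Finset.sum_mul]
  rw [Finset.sum_comm]
  refine Finset.sum_congr rfl fun x _ => ?_
  simp [ite_mul]

theorem marg_nonneg {f : α → β} {P : α → ℝ} (hP : ∀ x, 0 ≤ P x) (y : β) :
    0 ≤ marg f P y :=
  Finset.sum_nonneg fun x _ => by split_ifs <;> simp [hP]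

theorem IsPmf.marg [Fintype β] {P : α → ℝ} (hP : IsPmf P) (f : α → β) : IsPmf (marg f P) :=
  ⟨marg_nonneg hP.1, by simpa [hP.2] using sum_marg_mul f P fun _ => 1⟩

theorem exists_ne_zero_of_marg_ne_zero {f : α → β} {P : α → ℝ} {y : β}
    (h : marg f P y ≠ 0) :
    ∃ x, f x = y ∧ P x ≠ 0 := by
  obtain ⟨x, -, hx⟩ := Finset.exists_ne_zero_of_sum_ne_zero h
  exact ⟨x, by by_contra hc; simp [hc] at hx, by intro hc; simp [hc] at hx⟩

theorem le_marg {f : α → β} {P : α → ℝ} (hP : ∀ x, 0 ≤ P x) (x : α) :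
    P x ≤ marg f P (f x) := by
  have := Finset.single_le_sum (f := fun w => if f w = f x then P w else 0)
    (fun w _ => by split_ifs <;> simp [hP]) (Finset.mem_univ x)
  simpa [marg] using this

theorem marg_marg {γ : Type*} [Fintype β] [DecidableEq γ] (f : α → β) (g : β → γ) (P : α → ℝ) :
    marg g (marg f P) = marg (fun x => g (f x)) P := by
  funext y
  have := sum_marg_mul f P fun w => if g w = y then 1 else 0
  simpa [marg] using this

theorem marg_comp_equiv {α' : Type*} [Fintype α'] (e : α' ≃ α) (f : α → β) (P : α → ℝ) :
    marg (fun x => f (e x)) (fun x => P (e x)) = marg f P := by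
  funext y
  exact e.sum_comp fun x => if f x = y then P x else 0

end Marginals

section Information

variable {α : Type*} [Fintype α]

/-- A Pinsker-type inequality: the squared total variation distance, written as the total
excess of `a` over `R`, is at most the relative entropy in nats. -/
theorem sq_sum_excess_le_sum_mul_log {a R : α → ℝ} (ha : IsPmf a) (hR : IsPmf R)
    (hac : ∀ x, a x ≠ 0 → R x ≠ 0) :
    (∑ x, max (a x - R x) 0) ^ 2 ≤ ∑ x, a x * Real.log (a x / R x) := by
  have hexc : 2 * ∑ x, max (a x - R x) 0 = ∑ x, |a x - R x| := by
    have h0 : ∑ x, (a x - R x) = 0 := by rw [Finset.sum_sub_distrib, ha.2, hR.2, sub_self]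
    rw [← add_zero (∑ x, |a x - R x|)]
    nth_rewrite 2 [← h0]
    rw [Finset.mul_sum, ← Finset.sum_add_distrib]
    refine Finset.sum_congr rfl fun x _ => ?_
    rcases le_total (a x - R x) 0 with h | h
    · rw [max_eq_right h, abs_of_nonpos h]; ring
    · rw [max_eq_left h, abs_of_nonneg h]; ring
  have hkl : ∑ x, (√(a x) - √(R x)) ^ 2 ≤ ∑ x, a x * Real.log (a x / R x) := by
    have hle : ∑ x, (2 * a x - 2 * (√(a x) * √(R x))) ≤ ∑ x, a x * Real.log (a x / R x) := by
      refine Finset.sum_le_sum fun x _ => ?_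
      rcases (ha.1 x).eq_or_lt with h | h
      · simp [← h]
      have hRx : 0 < R x := lt_of_le_of_ne (hR.1 x) (Ne.symm (hac x h.ne'))
      have hsa := Real.sqrt_pos.2 h
      have hsR := Real.sqrt_pos.2 hRx
      have hlog : Real.log (a x / R x) = -(2 * Real.log (√(R x) / √(a x))) := by
        rw [Real.log_div h.ne' hRx.ne', Real.log_div hsR.ne' hsa.ne', Real.log_sqrt hRx.le,
          Real.log_sqrt h.le]
        ring
      have hub := Real.log_le_sub_one_of_pos (div_pos hsR hsa)
      have hmul : a x * (√(R x) / √(a x)) = √(a x) * √(R x) := by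
        nth_rewrite 1 [← Real.mul_self_sqrt h.le]
        field_simp
      rw [hlog]
      nlinarith [mul_le_mul_of_nonneg_left hub h.le]
    refine le_trans (le_of_eq ?_) hle
    have h0 : ∑ x, (a x - R x) = 0 := by rw [Finset.sum_sub_distrib, ha.2, hR.2, sub_self]
    rw [← add_zero (∑ x, (√(a x) - √(R x)) ^ 2), ← h0, ← Finset.sum_add_distrib]
    refine Finset.sum_congr rfl fun x _ => ?_
    rw [sub_sq, Real.sq_sqrt (ha.1 x), Real.sq_sqrt (hR.1 x)]
    ring
  have hplus : ∑ x, (√(a x) + √(R x)) ^ 2 ≤ 4 := by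
    have : ∑ x, (√(a x) + √(R x)) ^ 2 ≤ ∑ x, 2 * (a x + R x) := by
      refine Finset.sum_le_sum fun x _ => ?_
      nlinarith [sq_nonneg (√(a x) - √(R x)), Real.sq_sqrt (ha.1 x), Real.sq_sqrt (hR.1 x)]
    rw [← Finset.mul_sum, Finset.sum_add_distrib, ha.2, hR.2] at this
    linarith
  have habs : ∑ x, |a x - R x| = ∑ x, |√(a x) - √(R x)| * (√(a x) + √(R x)) := by
    refine Finset.sum_congr rfl fun x _ => ?_
    rw [← abs_of_nonneg (add_nonneg (Real.sqrt_nonneg (a x)) (Real.sqrt_nonneg (R x))),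
      ← abs_mul]
    congr 1
    nlinarith [Real.sq_sqrt (ha.1 x), Real.sq_sqrt (hR.1 x)]
  have hcs := Finset.sum_mul_sq_le_sq_mul_sq Finset.univ
    (fun x => |√(a x) - √(R x)|) (fun x => √(a x) + √(R x))
  simp only [sq_abs] at hcs
  rw [← habs, ← hexc] at hcs
  have hnn : 0 ≤ ∑ x, (√(a x) - √(R x)) ^ 2 := Finset.sum_nonneg fun x _ => sq_nonneg _
  nlinarith [mul_le_mul_of_nonneg_left hplus hnn]

/-- Jensen's inequality for the logarithm. -/
theorem sum_mul_log_le_log {P F : α → ℝ} (hP : IsPmf P) (hF : ∀ x, P x ≠ 0 → 0 < F x)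
    {c : ℝ} (hc : 0 < c) (h : ∑ x, P x * F x ≤ c) :
    ∑ x, P x * Real.log (F x) ≤ Real.log c := by
  have hle : ∑ x, P x * Real.log (F x) ≤ ∑ x, (P x * (Real.log c - 1) + P x * F x / c) := by
    refine Finset.sum_le_sum fun x _ => ?_
    by_cases hx : P x = 0
    · simp [hx]
    have hub := Real.log_le_sub_one_of_pos (div_pos (hF x hx) hc)
    rw [Real.log_div (hF x hx).ne' hc.ne'] at hub
    have := mul_le_mul_of_nonneg_left hub (hP.1 x)
    rw [mul_div_assoc]
    nlinarith
  rw [Finset.sum_add_distrib, ← Finset.sum_mul, ← Finset.sum_div, hP.2] at hle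
  have := (div_le_one hc).2 h
  linarith

end Information

section Tensorization

variable {𝒰 𝒳 𝒱 𝒴 : Type*} [Fintype 𝒰] [Fintype 𝒳] [Fintype 𝒱]
  [DecidableEq 𝒴]

/-- The conditional distribution of `v` given `π x`, extended to a channel. -/
theorem exists_channel [Nonempty 𝒱] (π : 𝒳 → 𝒴) {a : 𝒱 × 𝒳 → ℝ} (ha : IsPmf a) :
    ∃ q : 𝒴 → 𝒱 → ℝ, (∀ y, IsPmf (q y)) ∧ (∀ v x, a (v, x) ≠ 0 → q (π x) v ≠ 0) ∧
      ∀ v y, ∑ x, (if π x = y then a (v, x) / q y v else 0) ≤ marg (fun w => π w.2) a y := by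
  set c : 𝒴 → ℝ := marg (fun w => π w.2) a with hc
  set b : 𝒴 → 𝒱 → ℝ := fun y v => ∑ x, if π x = y then a (v, x) else 0 with hb
  have hb0 : ∀ y v, 0 ≤ b y v := fun y v =>
    Finset.sum_nonneg fun x _ => by split_ifs <;> simp [ha.1]
  have hc0 : ∀ y, 0 ≤ c y := marg_nonneg ha.1
  have hbc : ∀ y, ∑ v, b y v = c y := fun y => by
    simp only [hb, hc, marg, Fintype.sum_prod_type]
  have hble : ∀ y v, b y v ≤ c y := fun y v => by
    rw [← hbc]
    exact Finset.single_le_sum (fun v _ => hb0 y v) (Finset.mem_univ v)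
  have hab : ∀ v x, a (v, x) ≤ b (π x) v := fun v x => by
    have := Finset.single_le_sum (f := fun w => if π w = π x then a (v, w) else 0)
      (fun w _ => by split_ifs <;> simp [ha.1]) (Finset.mem_univ x)
    simpa using this
  refine ⟨fun y v => if c y = 0 then 1 / Fintype.card 𝒱 else b y v / c y,
    fun y => ⟨fun v => ?_, ?_⟩, fun v x h => ?_, fun v y => ?_⟩
  · dsimp only
    split_ifs
    · positivity
    · exact div_nonneg (hb0 y v) (hc0 y)
  · by_cases h : c y = 0
    · simp [h]
    · simp only [h, if_false]
      rw [← Finset.sum_div, hbc, div_self h]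
  · have hpos : 0 < a (v, x) := lt_of_le_of_ne (ha.1 _) (Ne.symm h)
    have hb1 : 0 < b (π x) v := hpos.trans_le (hab v x)
    have hc1 : 0 < c (π x) := hb1.trans_le (hble _ v)
    simp only [hc1.ne', if_false]
    exact (div_pos hb1 hc1).ne'
  · have hrw : ∀ t : ℝ, ∑ x, (if π x = y then a (v, x) / t else 0) = b y v / t := fun t => by
      simp only [hb, Finset.sum_div]
      exact Finset.sum_congr rfl fun x _ => by split_ifs <;> simp
    rw [hrw]
    dsimp only
    split_ifs with h
    · have : b y v = 0 := le_antisymm (h ▸ hble y v) (hb0 y v)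
      simp [this, h]
    · by_cases hbz : b y v = 0
      · simpa [hbz] using hc0 y
      · rw [div_div_cancel₀ hbz]

theorem sum_pi_le_one [Fintype 𝒴] {n : ℕ} (π : 𝒳 → 𝒴) (g : Fin n → 𝒱 → 𝒳 → ℝ) (c : Fin n → 𝒴 → ℝ)
    (hg : ∀ j v x, 0 ≤ g j v x) (hc : ∀ j, IsPmf (c j))
    (hgc : ∀ j v y, ∑ x, (if π x = y then g j v x else 0) ≤ c j y)
    (Q : (Fin n → 𝒴) → (Fin n → 𝒱) → ℝ) (hQ : ∀ y, IsPmf (Q y)) :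
    ∑ x : Fin n → 𝒳, ∑ v, Q (fun j => π (x j)) v * ∏ j, g j (v j) (x j) ≤ 1 := by
  have hfib : ∀ x : Fin n → 𝒳, ∑ v, Q (fun j => π (x j)) v * ∏ j, g j (v j) (x j) =
      ∑ y, ∑ v, Q y v * ∏ j, (if π (x j) = y j then g j (v j) (x j) else 0) := fun x => by
    rw [Finset.sum_eq_single (fun j => π (x j))]
    · simp
    · intro y _ hy
      obtain ⟨j, hj⟩ := Function.ne_iff.1 hy
      refine Finset.sum_eq_zero fun v _ => ?_
      rw [Finset.prod_eq_zero (Finset.mem_univ j) (if_neg (Ne.symm hj)), mul_zero]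
    · simp
  calc ∑ x : Fin n → 𝒳, ∑ v, Q (fun j => π (x j)) v * ∏ j, g j (v j) (x j)
      = ∑ y, ∑ v, Q y v * ∏ j, ∑ x, (if π x = y j then g j (v j) x else 0) := by
        rw [Finset.sum_congr rfl fun x _ => hfib x, Finset.sum_comm]
        refine Finset.sum_congr rfl fun y _ => ?_
        rw [Finset.sum_comm]
        refine Finset.sum_congr rfl fun v _ => ?_
        rw [← Finset.mul_sum, Finset.prod_univ_sum, Fintype.piFinset_univ]
    _ ≤ ∑ y, ∑ v, Q y v * ∏ j, c j (y j) := by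
        refine Finset.sum_le_sum fun y _ => Finset.sum_le_sum fun v _ => ?_
        refine mul_le_mul_of_nonneg_left (Finset.prod_le_prod (fun j _ => ?_) fun j _ => ?_)
          ((hQ y).1 v)
        · exact Finset.sum_nonneg fun x _ => by split_ifs <;> simp [hg]
        · exact hgc j (v j) (y j)
    _ = 1 := by
        simp only [← Finset.sum_mul, (hQ _).2, one_mul]
        rw [← Fintype.piFinset_univ, ← Finset.prod_univ_sum]
        exact Finset.prod_eq_one fun j _ => (hc j).2

/-- Single-letterization: a distribution on `n` copies that is dominated, on the `σ`-marginal,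
by `L` times a channel from `π`-inputs with i.i.d. inputs has single-letter marginals whose
excesses over such products have total square at most `log L`. -/
theorem exists_channel_sum_sq_excess_le [Fintype 𝒴] [DecidableEq 𝒳] [DecidableEq 𝒱]
    [Nonempty 𝒱] {n : ℕ} (σ : 𝒰 → 𝒱) (π : 𝒳 → 𝒴)
    {PX : 𝒳 → ℝ} (hPX : IsPmf PX)
    {T : (Fin n → 𝒰) × (Fin n → 𝒳) → ℝ} (hT : IsPmf T)
    (hsupp : ∀ z, T z ≠ 0 → ∀ j, PX (z.2 j) ≠ 0)
    {L : ℝ} (hL : 0 < L) (Q : (Fin n → 𝒴) → (Fin n → 𝒱) → ℝ) (hQ : ∀ y, IsPmf (Q y))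
    (hdom : ∀ v x, marg (fun z => ((fun j => σ (z.1 j)), z.2)) T (v, x) ≤
      L * (Q (fun j => π (x j)) v * ∏ j, PX (x j))) :
    ∃ q : Fin n → 𝒴 → 𝒱 → ℝ, (∀ j y, IsPmf (q j y)) ∧
      ∑ j, (∑ w : 𝒱 × 𝒳, max (marg (fun z => (σ (z.1 j), z.2 j)) T w -
        q j (π w.2) w.1 * PX w.2) 0) ^ 2 ≤ Real.log L := by
  set a : Fin n → 𝒱 × 𝒳 → ℝ := fun j => marg (fun z => (σ (z.1 j), z.2 j)) T with hadef
  have ha : ∀ j, IsPmf (a j) := fun j => hT.marg _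
  choose q hq hqs hqc using fun j => exists_channel π (ha j)
  refine ⟨q, hq, ?_⟩
  set R : Fin n → 𝒱 × 𝒳 → ℝ := fun j w => q j (π w.2) w.1 * PX w.2 with hRdef
  have hR : ∀ j, IsPmf (R j) := fun j => by
    refine ⟨fun w => mul_nonneg ((hq j _).1 _) (hPX.1 _), ?_⟩
    simp only [hRdef, Fintype.sum_prod_type_right, ← Finset.sum_mul, (hq j _).2, one_mul, hPX.2]
  have hac : ∀ j w, a j w ≠ 0 → R j w ≠ 0 := fun j w hw => by
    obtain ⟨z, rfl, hz⟩ := exists_ne_zero_of_marg_ne_zero hw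
    exact mul_ne_zero (hqs j _ _ hw) (hsupp z hz j)
  have hlog : ∑ z, T z * Real.log (∏ j, (a j (σ (z.1 j), z.2 j) / R j (σ (z.1 j), z.2 j))) =
      ∑ j, ∑ w, a j w * Real.log (a j w / R j w) := by
    simp only [hadef, sum_marg_mul]
    rw [Finset.sum_comm]
    refine Finset.sum_congr rfl fun z _ => ?_
    by_cases hz : T z = 0
    · simp [hz]
    rw [← Finset.mul_sum, Real.log_prod]
    intro j _
    have hpos : a j (σ (z.1 j), z.2 j) ≠ 0 :=
      ((lt_of_le_of_ne (hT.1 z) (Ne.symm hz)).trans_le (le_marg hT.1 z)).ne'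
    exact div_ne_zero hpos (hac j _ hpos)
  refine (Finset.sum_le_sum fun j _ =>
    sq_sum_excess_le_sum_mul_log (ha j) (hR j) (hac j)).trans ?_
  rw [← hlog]
  refine sum_mul_log_le_log hT (fun z hz => Finset.prod_pos fun j _ => ?_) hL ?_
  · have hpos : 0 < a j (σ (z.1 j), z.2 j) :=
      (lt_of_le_of_ne (hT.1 z) (Ne.symm hz)).trans_le (le_marg hT.1 z)
    exact div_pos hpos (lt_of_le_of_ne ((hR j).1 _) (Ne.symm (hac j _ hpos.ne')))
  calc ∑ z, T z * ∏ j, (a j (σ (z.1 j), z.2 j) / R j (σ (z.1 j), z.2 j))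
      = ∑ w, marg (fun z => ((fun j => σ (z.1 j)), z.2)) T w *
          ∏ j, (a j (w.1 j, w.2 j) / R j (w.1 j, w.2 j)) :=
        (sum_marg_mul (fun z => ((fun j => σ (z.1 j)), z.2)) T
          fun w => ∏ j, (a j (w.1 j, w.2 j) / R j (w.1 j, w.2 j))).symm
    _ ≤ ∑ w : (Fin n → 𝒱) × (Fin n → 𝒳), L * (Q (fun j => π (w.2 j)) w.1 *
          ∏ j, (a j (w.1 j, w.2 j) / q j (π (w.2 j)) (w.1 j))) := by
        refine Finset.sum_le_sum fun w _ => ?_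
        have hnn : ∀ j, 0 ≤ a j (w.1 j, w.2 j) / R j (w.1 j, w.2 j) := fun j =>
          div_nonneg ((ha j).1 _) ((hR j).1 _)
        refine (mul_le_mul_of_nonneg_right (hdom w.1 w.2)
          (Finset.prod_nonneg fun j _ => hnn j)).trans ?_
        rw [mul_assoc, mul_assoc, ← Finset.prod_mul_distrib]
        refine mul_le_mul_of_nonneg_left (mul_le_mul_of_nonneg_left
          (Finset.prod_le_prod (fun j _ => mul_nonneg (hPX.1 _) (hnn j)) fun j _ => ?_)
          ((hQ _).1 _)) hL.le
        by_cases hz : PX (w.2 j) = 0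
        · rw [hz, zero_mul]
          exact div_nonneg ((ha j).1 _) ((hq j _).1 _)
        · simp only [hRdef]
          rw [mul_div_assoc', mul_comm (q j _ _), mul_div_mul_left _ _ hz]
    _ ≤ L := by
        rw [← Finset.mul_sum, Fintype.sum_prod_type_right]
        refine mul_le_of_le_one_right hL.le (sum_pi_le_one π
          (fun j v x => a j (v, x) / q j (π x) v) (fun j => marg (fun w => π w.2) (a j))
          (fun j v x => div_nonneg ((ha j).1 _) ((hq j _).1 _)) (fun j => (ha j).marg _)
          (fun j v y => ?_) Q hQ)
        refine le_trans (le_of_eq (Finset.sum_congr rfl fun x _ => ?_)) (hqc j v y)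
        split_ifs with h
        · rw [h]
        · rfl

end Tensorization

theorem one_sub_prod_le_sum_one_sub {κ : Type*} (s : Finset κ) (r : κ → ℝ)
    (h0 : ∀ k, 0 ≤ r k) (h1 : ∀ k, r k ≤ 1) : 1 - ∏ k ∈ s, r k ≤ ∑ k ∈ s, (1 - r k) := by
  classical
  induction s using Finset.induction_on with
  | empty => simp
  | insert k s hk ih =>
    rw [Finset.prod_insert hk, Finset.sum_insert hk]
    have hp1 : ∏ k ∈ s, r k ≤ 1 := Finset.prod_le_one (fun k _ => h0 k) fun k _ => h1 k
    nlinarith [mul_nonneg (sub_nonneg.2 (h1 k)) (sub_nonneg.2 hp1)]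

section Games

variable {ι : Type*} [Fintype ι] [DecidableEq ι] {X U : ι → Type*}
  [∀ i, Fintype (X i)] [∀ i, DecidableEq (X i)] [∀ i, Fintype (U i)] [∀ i, DecidableEq (U i)]

/-- The sets of provers constrained by a sub-nonsignalling strategy; the empty set stands for
subnormalization. -/
abbrev ConstrainedSet (ι : Type*) [Fintype ι] [DecidableEq ι] :=
  {A : Finset ι // A ≠ Finset.univ ∨ A = ∅}

theorem card_constrainedSet_le : Fintype.card (ConstrainedSet ι) ≤ 2 ^ Fintype.card ι := by
  simpa using Fintype.card_subtype_le fun A : Finset ι => A ≠ Finset.univ ∨ A = ∅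

theorem IsSNS.exists_channel {K : (∀ i, X i) → (∀ i, U i) → ℝ} (hK : IsSNS K)
    (A : ConstrainedSet ι) :
    ∃ Q : (∀ i : {j // j ∈ A.1}, X i.1) → (∀ i : {j // j ∈ A.1}, U i.1) → ℝ,
      (∀ xA, IsPmf (Q xA)) ∧
      ∀ x uA, marg (fun u => fun i : {j // j ∈ A.1} => u i.1) (K x) uA
                ≤ Q (fun i => x i.1) uA := by
  obtain ⟨A, hA⟩ := A
  by_cases h : A = Finset.univ
  · obtain rfl : A = ∅ := hA.resolve_left (not_not.2 h)
    refine ⟨fun _ _ => 1, fun _ => ⟨fun _ => zero_le_one, by simp⟩, fun x uA => ?_⟩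
    refine le_trans (Finset.sum_le_sum fun u _ => ?_) (hK.2.1 x)
    split_ifs
    · exact le_rfl
    · exact hK.1 x u
  · exact hK.2.2 A h

theorem isSNS_of_forall_channel {K : (∀ i, X i) → (∀ i, U i) → ℝ} (h0 : ∀ x u, 0 ≤ K x u)
    (q : ∀ A : ConstrainedSet ι,
      (∀ i : {j // j ∈ A.1}, X i.1) → (∀ i : {j // j ∈ A.1}, U i.1) → ℝ)
    (hq : ∀ A y, IsPmf (q A y))
    (hdom : ∀ A x v, marg (fun u => fun i : {j // j ∈ A.1} => u i.1) (K x) v ≤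
      q A (fun i => x i.1) v) : IsSNS K := by
  refine ⟨h0, fun x => ?_, fun A hA => ⟨q ⟨A, Or.inl hA⟩, hq ⟨A, Or.inl hA⟩, hdom ⟨A, Or.inl hA⟩⟩⟩
  have hsum := Finset.sum_le_sum fun v (_ : v ∈ Finset.univ) => hdom ⟨∅, Or.inr rfl⟩ x v
  rw [(hq _ _).2] at hsum
  have htot := sum_marg_mul (fun u => fun i : {j // j ∈ (∅ : Finset ι)} => u i.1) (K x)
    fun _ => 1
  simp only [mul_one] at htot
  exact htot ▸ hsum

theorem bddAbove_snsSet {PX : (∀ i, X i) → ℝ} (hPX : IsPmf PX)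
    {ω : (∀ i, X i) → (∀ i, U i) → ℝ} (hω : ∀ x u, ω x u ≤ 1) :
    BddAbove (snsSet X U PX ω) := by
  refine ⟨1, ?_⟩
  rintro E ⟨K, hK, rfl⟩
  rw [← hPX.2]
  refine Finset.sum_le_sum fun x _ => mul_le_of_le_one_right (hPX.1 x) ?_
  exact (Finset.sum_le_sum fun u _ => mul_le_of_le_one_right (hK.1 x u) (hω x u)).trans (hK.2.1 x)

/-- Approximation of a joint distribution of answers and questions by a sub-nonsignalling
strategy, the loss being measured by the excess over nonsignalling marginals. -/
theorem expect_le_sSup_snsSet_add {PX : (∀ i, X i) → ℝ} (hPX : IsPmf PX)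
    {ω : (∀ i, X i) → (∀ i, U i) → ℝ} (hω1 : ∀ x u, ω x u ≤ 1)
    {T : (∀ i, U i) × (∀ i, X i) → ℝ} (hT : IsPmf T) (hsupp : ∀ z, T z ≠ 0 → PX z.2 ≠ 0)
    (q : ∀ A : ConstrainedSet ι,
      (∀ i : {j // j ∈ A.1}, X i.1) → (∀ i : {j // j ∈ A.1}, U i.1) → ℝ)
    (hq : ∀ A y, IsPmf (q A y)) :
    ∑ z, T z * ω z.2 z.1 ≤ sSup (snsSet X U PX ω) + ∑ A : ConstrainedSet ι,
      ∑ w : (∀ i : {j // j ∈ A.1}, U i.1) × (∀ i, X i),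
        max (marg (fun z => ((fun i : {j // j ∈ A.1} => z.1 i.1), z.2)) T w -
          q A (fun i => w.2 i.1) w.1 * PX w.2) 0 := by
  set a : ∀ A : ConstrainedSet ι, (∀ i : {j // j ∈ A.1}, U i.1) × (∀ i, X i) → ℝ :=
    fun A => marg (fun z => ((fun i : {j // j ∈ A.1} => z.1 i.1), z.2)) T with hadef
  set R : ∀ A : ConstrainedSet ι, (∀ i : {j // j ∈ A.1}, U i.1) × (∀ i, X i) → ℝ :=
    fun A w => q A (fun i => w.2 i.1) w.1 * PX w.2 with hRdef
  set r : ∀ A : ConstrainedSet ι, (∀ i : {j // j ∈ A.1}, U i.1) × (∀ i, X i) → ℝ :=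
    fun A w => min 1 (R A w / a A w) with hrdef
  have ha0 : ∀ A w, 0 ≤ a A w := fun A w => marg_nonneg hT.1 w
  have hR0 : ∀ A w, 0 ≤ R A w := fun A w => mul_nonneg ((hq A _).1 _) (hPX.1 _)
  have hr0 : ∀ A w, 0 ≤ r A w := fun A w => le_min zero_le_one (div_nonneg (hR0 A w) (ha0 A w))
  have hr1 : ∀ A w, r A w ≤ 1 := fun A w => min_le_left _ _
  have har : ∀ A w, a A w * r A w ≤ R A w := fun A w => by
    rcases (ha0 A w).eq_or_lt with h | h
    · rw [← h, zero_mul]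
      exact hR0 A w
    · refine (mul_le_mul_of_nonneg_left (min_le_right _ _) h.le).trans_eq ?_
      rw [mul_div_cancel₀ _ h.ne']
  have hloss : ∀ A w, a A w * (1 - r A w) ≤ max (a A w - R A w) 0 := fun A w => by
    rcases (ha0 A w).eq_or_lt with h | h
    · rw [← h, zero_mul]
      exact le_max_right _ _
    · rcases le_total 1 (R A w / a A w) with h' | h'
      · simp [hrdef, min_eq_left h']
      · simp only [hrdef, min_eq_right h']
        rw [mul_sub, mul_one, mul_div_cancel₀ _ h.ne']
        exact le_max_left _ _
  set ρ : (∀ i, U i) × (∀ i, X i) → ℝ := fun z =>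
    ∏ A : ConstrainedSet ι, r A ((fun i : {j // j ∈ A.1} => z.1 i.1), z.2) with hρdef
  have hρ0 : ∀ z, 0 ≤ ρ z := fun z => Finset.prod_nonneg fun A _ => hr0 A _
  have hρr : ∀ z (A : ConstrainedSet ι),
      ρ z ≤ r A ((fun i : {j // j ∈ A.1} => z.1 i.1), z.2) := fun z A => by
    simp only [hρdef]
    rw [← Finset.mul_prod_erase _ _ (Finset.mem_univ A)]
    exact mul_le_of_le_one_right (hr0 A _)
      (Finset.prod_le_one (fun B _ => hr0 B _) fun B _ => hr1 B _)
  set K : (∀ i, X i) → (∀ i, U i) → ℝ := fun x u => T (u, x) * ρ (u, x) / PX x with hKdef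
  have hK0 : ∀ x u, 0 ≤ K x u := fun x u =>
    div_nonneg (mul_nonneg (hT.1 _) (hρ0 _)) (hPX.1 x)
  have hK : IsSNS K := by
    refine isSNS_of_forall_channel hK0 q hq fun A x v => ?_
    have hav : a A (v, x) = ∑ u, if (fun i : {j // j ∈ A.1} => u i.1) = v then T (u, x) else 0 := by
      simp only [hadef, marg, Fintype.sum_prod_type, Prod.mk.injEq]
      refine Finset.sum_congr rfl fun u _ => ?_
      rw [Finset.sum_eq_single x] <;> simp +contextual
    have hle : marg (fun u => fun i : {j // j ∈ A.1} => u i.1) (K x) v ≤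
        a A (v, x) * r A (v, x) / PX x := by
      rw [hav, Finset.sum_mul, Finset.sum_div]
      refine Finset.sum_le_sum fun u _ => ?_
      split_ifs with h
      · subst h
        exact div_le_div_of_nonneg_right
          (mul_le_mul_of_nonneg_left (hρr (u, x) A) (hT.1 _)) (hPX.1 x)
      · simp
    refine (hle.trans (div_le_div_of_nonneg_right (har A _) (hPX.1 x))).trans ?_
    by_cases hx : PX x = 0
    · simpa [hx] using (hq A _).1 v
    · simp only [hRdef]
      rw [mul_div_cancel_right₀ _ hx]
  have hpay : ∑ x, PX x * ∑ u, K x u * ω x u = ∑ z, T z * ρ z * ω z.2 z.1 := by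
    rw [Fintype.sum_prod_type_right]
    refine Finset.sum_congr rfl fun x _ => ?_
    rw [Finset.mul_sum]
    refine Finset.sum_congr rfl fun u _ => ?_
    by_cases hx : PX x = 0
    · have : T (u, x) = 0 := by
        by_contra hc
        exact hsupp _ hc hx
      simp [hx, this]
    · simp only [hKdef]
      field_simp
  have hsup : ∑ z, T z * ρ z * ω z.2 z.1 ≤ sSup (snsSet X U PX ω) :=
    le_csSup (bddAbove_snsSet hPX hω1) ⟨K, hK, hpay.symm⟩
  have hdiff : ∑ z, T z * ω z.2 z.1 ≤ ∑ z, T z * ρ z * ω z.2 z.1 +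
      ∑ z, ∑ A : ConstrainedSet ι,
        T z * (1 - r A ((fun i : {j // j ∈ A.1} => z.1 i.1), z.2)) := by
    rw [← Finset.sum_add_distrib]
    refine Finset.sum_le_sum fun z _ => ?_
    rw [← Finset.mul_sum]
    have h1 := one_sub_prod_le_sum_one_sub Finset.univ
      (fun A : ConstrainedSet ι => r A ((fun i : {j // j ∈ A.1} => z.1 i.1), z.2))
      (fun A => hr0 A _) fun A => hr1 A _
    have hρ1 : ρ z ≤ 1 := Finset.prod_le_one (fun A _ => hr0 A _) fun A _ => hr1 A _
    have h2 : (1 - ρ z) * ω z.2 z.1 ≤ 1 - ρ z :=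
      mul_le_of_le_one_right (sub_nonneg.2 hρ1) (hω1 _ _)
    have h3 := mul_le_mul_of_nonneg_left (h2.trans h1) (hT.1 z)
    linarith
  refine hdiff.trans (add_le_add hsup ?_)
  rw [Finset.sum_comm]
  refine Finset.sum_le_sum fun A _ => ?_
  rw [← sum_marg_mul (fun z => ((fun i : {j // j ∈ A.1} => z.1 i.1), z.2)) T
    fun w => 1 - r A w]
  exact Finset.sum_le_sum fun w _ => hloss A w

/-- The exponent obtained from the single-letter estimates dominates the claimed one. -/
theorem four_pow_le_const (m : ℕ) :
    ((2 : ℝ) ^ m) ^ 2 ≤ (2 * Real.log 2) * (2 * (2 ^ (m + 1) - 3) + 1) ^ 2 := by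
  have hlog : 1 ≤ 2 * Real.log 2 := by linarith [Real.log_two_gt_d9]
  have hsq : ((2 : ℝ) ^ m) ^ 2 ≤ (2 * (2 ^ (m + 1) - 3) + 1) ^ 2 := by
    rcases m with _ | m
    · norm_num
    · have : (1 : ℝ) ≤ 2 ^ m := one_le_pow₀ (by norm_num)
      refine pow_le_pow_left₀ (by positivity) ?_ 2
      rw [pow_succ, pow_succ, pow_succ]
      linarith
  nlinarith [sq_nonneg ((2 : ℝ) * (2 ^ (m + 1) - 3) + 1)]

/-- Bound on `n` rounds for a joint distribution dominated, for each constrained set of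
provers, by `L` times a channel with i.i.d. questions. -/
theorem mul_sq_le_of_dominated [∀ i, Nonempty (U i)] {PX : (∀ i, X i) → ℝ} (hPX : IsPmf PX)
    {ω : (∀ i, X i) → (∀ i, U i) → ℝ} (hω1 : ∀ x u, ω x u ≤ 1)
    {n : ℕ} (hn : 1 ≤ n) {T : (Fin n → ∀ i, U i) × (Fin n → ∀ i, X i) → ℝ} (hT : IsPmf T)
    (hsupp : ∀ z, T z ≠ 0 → ∀ j, PX (z.2 j) ≠ 0) {L : ℝ} (hL : 0 < L)
    (hdom : ∀ A : ConstrainedSet ι, ∃ Q : (Fin n → ∀ i : {j // j ∈ A.1}, X i.1) →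
      (Fin n → ∀ i : {j // j ∈ A.1}, U i.1) → ℝ, (∀ y, IsPmf (Q y)) ∧
      ∀ v x, marg (fun z => ((fun j => fun i : {j // j ∈ A.1} => z.1 j i.1), z.2)) T (v, x) ≤
        L * (Q (fun j i => x j i.1) v * ∏ j, PX (x j)))
    {ν : ℝ} (hν : 0 < ν)
    (hpay : n * (sSup (snsSet X U PX ω) + ν) ≤ ∑ z, T z * ∑ j, ω (z.2 j) (z.1 j)) :
    n * ν ^ 2 ≤ (2 ^ Fintype.card ι) ^ 2 * Real.log L := by
  choose Q hQ hQd using hdom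
  choose q hq hqe using fun A : ConstrainedSet ι => exists_channel_sum_sq_excess_le
    (fun u => fun i : {j // j ∈ A.1} => u i.1) (fun x => fun i : {j // j ∈ A.1} => x i.1)
    hPX hT hsupp hL (Q A) (hQ A) (hQd A)
  set e : ConstrainedSet ι → Fin n → ℝ := fun A j =>
    ∑ w : (∀ i : {j // j ∈ A.1}, U i.1) × (∀ i, X i),
      max (marg (fun z => ((fun i : {j // j ∈ A.1} => z.1 j i.1), z.2 j)) T w -
        q A j (fun i => w.2 i.1) w.1 * PX w.2) 0 with hedef
  have hround : ∀ j, ∑ z, T z * ω (z.2 j) (z.1 j) ≤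
      sSup (snsSet X U PX ω) + ∑ A, e A j := fun j => by
    have h := expect_le_sSup_snsSet_add hPX hω1 (hT.marg fun z => (z.1 j, z.2 j))
      (fun w hw => by
        obtain ⟨z, rfl, hz⟩ := exists_ne_zero_of_marg_ne_zero hw
        exact hsupp z hz j) (fun A => q A j) (fun A => hq A j)
    rw [sum_marg_mul (fun z => (z.1 j, z.2 j)) T fun w => ω w.2 w.1] at h
    simpa only [marg_marg] using h
  have hn0 : (0 : ℝ) < n := by exact_mod_cast hn
  have hlin : n * ν ≤ ∑ A, ∑ j, e A j := by
    have h := Finset.sum_le_sum fun j (_ : j ∈ Finset.univ) => hround j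
    rw [Finset.sum_add_distrib, Finset.sum_comm, Finset.sum_comm (f := fun j A => e A j)] at h
    simp only [← Finset.mul_sum, Finset.sum_const, Finset.card_univ, Fintype.card_fin,
      nsmul_eq_mul] at h
    linarith
  have hlog : 0 ≤ Real.log L :=
    (Finset.sum_nonneg fun j _ => sq_nonneg (e ⟨∅, Or.inr rfl⟩ j)).trans (hqe ⟨∅, Or.inr rfl⟩)
  have hA : ∀ A, ∑ j, e A j ≤ √(n * Real.log L) := fun A => by
    refine Real.le_sqrt_of_sq_le ((sq_sum_le_card_mul_sum_sq).trans ?_)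
    simpa using mul_le_mul_of_nonneg_left (hqe A) hn0.le
  have htot : n * ν ≤ 2 ^ Fintype.card ι * √(n * Real.log L) := by
    refine (hlin.trans (Finset.sum_le_sum fun A _ => hA A)).trans ?_
    rw [Finset.sum_const, nsmul_eq_mul]
    refine mul_le_mul_of_nonneg_right ?_ (Real.sqrt_nonneg _)
    exact_mod_cast card_constrainedSet_le (ι := ι)
  have hsq := pow_le_pow_left₀ (by positivity) htot 2
  rw [mul_pow _ √_, Real.sq_sqrt (by positivity)] at hsq
  refine le_of_mul_le_mul_left ?_ hn0
  linarith

end Games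

/-- Multiprover parallel repetition theorem for sub-nonsignalling strategies
(Lancien–Winter): if `ρ_SNS(G) < 1`, `0 < ν ≤ 1 − ρ_SNS(G)` and
`Δ ≥ ρ_SNS(G) + ν`, then under any sub-nonsignalling strategy the probability of
winning at least `nΔ` of the `n` parallel games is at most `exp(−n ν²/C_m)`,
where `C_m = (2 ln 2)(2(2^{m+1}−3)+1)²` and `m` is the number of provers. -/
theorem multiprover_parallel_repetition
    {ι : Type*} [Fintype ι] [DecidableEq ι] (X U : ι → Type*)
    [∀ i, Fintype (X i)] [∀ i, DecidableEq (X i)]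
    [∀ i, Fintype (U i)] [∀ i, DecidableEq (U i)] [∀ i, Nonempty (U i)]
    (PX : (∀ i, X i) → ℝ) (hPX : IsPmf PX)
    (ω : (∀ i, X i) → (∀ i, U i) → ℝ) (hω : ∀ x u, ω x u = 0 ∨ ω x u = 1)
    (hval : sSup (snsSet X U PX ω) < 1)
    (ν : ℝ) (hν : 0 < ν) (hν1 : ν ≤ 1 - sSup (snsSet X U PX ω))
    (Δ : ℝ) (hΔ : sSup (snsSet X U PX ω) + ν ≤ Δ)
    (n : ℕ) (hn : 1 ≤ n)
    (K : (∀ i, Fin n → X i) → (∀ i, Fin n → U i) → ℝ)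
    (hK : IsSNS (X := fun i => Fin n → X i) (U := fun i => Fin n → U i) K) :
    ∑ z : (∀ i, Fin n → U i) × (∀ i, Fin n → X i),
        (if (n : ℝ) * Δ ≤ ∑ j, ω (fun i => z.2 i j) (fun i => z.1 i j) then
          (∏ j, PX (fun i => z.2 i j)) * K z.2 z.1 else 0)
      ≤ Real.exp (-(n * ν ^ 2 /
          ((2 * Real.log 2) * (2 * (2 ^ (Fintype.card ι + 1) - 3) + 1) ^ 2))) := by
  have hω1 : ∀ x u, ω x u ≤ 1 := fun x u => by rcases hω x u with h | h <;> simp [h]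
  set eX : (Fin n → ∀ i, X i) ≃ (∀ i, Fin n → X i) := Equiv.piComm fun _ i => X i
  set eU : (Fin n → ∀ i, U i) ≃ (∀ i, Fin n → U i) := Equiv.piComm fun _ i => U i
  set W : (Fin n → ∀ i, U i) × (Fin n → ∀ i, X i) → ℝ := fun z =>
    if (n : ℝ) * Δ ≤ ∑ j, ω (z.2 j) (z.1 j) then
      (∏ j, PX (z.2 j)) * K (eX z.2) (eU z.1) else 0 with hWdef
  have hprod : ∀ x : Fin n → ∀ i, X i, 0 ≤ ∏ j, PX (x j) := fun x =>
    Finset.prod_nonneg fun j _ => hPX.1 _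
  have hW0 : ∀ z, 0 ≤ W z := fun z => by
    simp only [hWdef]
    split_ifs
    · exact mul_nonneg (hprod _) (hK.1 _ _)
    · exact le_rfl
  have hWK : ∀ z, W z ≤ (∏ j, PX (z.2 j)) * K (eX z.2) (eU z.1) := fun z => by
    simp only [hWdef]
    split_ifs
    · exact le_rfl
    · exact mul_nonneg (hprod _) (hK.1 _ _)
  rw [← (eU.prodCongr eX).sum_comp]
  change ∑ z, W z ≤ _
  obtain ⟨p, hp⟩ : ∃ p, p = ∑ z, W z := ⟨_, rfl⟩
  rw [← hp]
  have hp_nonneg : 0 ≤ p := hp ▸ Finset.sum_nonneg fun z _ => hW0 z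
  rcases hp_nonneg.eq_or_lt with hp0 | hp0
  · rw [← hp0]
    positivity
  have hT : IsPmf fun z => W z / p :=
    ⟨fun z => div_nonneg (hW0 z) hp0.le, by rw [← Finset.sum_div, ← hp, div_self hp0.ne']⟩
  have hmain : n * ν ^ 2 ≤ (2 ^ Fintype.card ι) ^ 2 * Real.log p⁻¹ := by
    refine mul_sq_le_of_dominated hPX hω1 hn hT (fun z hz j hj => hz ?_) (inv_pos.2 hp0)
      (fun A => ?_) hν ?_
    · have hzero : ∏ j, PX (z.2 j) = 0 := Finset.prod_eq_zero (Finset.mem_univ j) hj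
      simp [hWdef, hzero]
    · obtain ⟨Q, hQ, hQd⟩ := hK.exists_channel A
      refine ⟨fun y v => Q (fun i j => y j i) (fun i j => v j i), fun y =>
        ⟨fun v => (hQ _).1 _, ?_⟩, fun v x => ?_⟩
      · rw [← (hQ fun i j => y j i).2]
        exact (Equiv.piComm fun (_ : Fin n) (i : {j // j ∈ A.1}) => U i.1).sum_comp
          fun v => Q (fun i j => y j i) v
      · have hd := hQd (eX x) fun i j => v j i
        rw [← marg_comp_equiv eU] at hd
        refine le_trans ?_ (mul_le_mul_of_nonneg_left (mul_le_mul_of_nonneg_right hd (hprod x))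
          (inv_pos.2 hp0).le)
        simp only [marg, Fintype.sum_prod_type, Prod.mk.injEq]
        rw [Finset.sum_mul, Finset.mul_sum]
        refine Finset.sum_le_sum fun u _ => ?_
        rw [Finset.sum_eq_single x (by simp +contextual) (by simp)]
        have hiff : (fun j => fun i : {j // j ∈ A.1} => u j i.1) = v ↔
            (fun i : {j // j ∈ A.1} => eU u i.1) = fun i j => v j i :=
          ⟨fun h => by subst h; rfl, fun h => by
            funext j i
            exact congrFun (congrFun h i) j⟩
        by_cases h : (fun j => fun i : {j // j ∈ A.1} => u j i.1) = v
        · rw [if_pos ⟨h, rfl⟩, if_pos (hiff.1 h), div_eq_inv_mul, mul_comm (K _ _)]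
          exact mul_le_mul_of_nonneg_left (hWK (u, x)) (inv_pos.2 hp0).le
        · rw [if_neg fun hc => h hc.1, if_neg fun hc => h (hiff.2 hc)]
          simp
    · refine (mul_le_mul_of_nonneg_left hΔ n.cast_nonneg).trans ?_
      rw [← one_mul ((n : ℝ) * Δ), ← hT.2, Finset.sum_mul]
      refine Finset.sum_le_sum fun z _ => ?_
      by_cases h : (n : ℝ) * Δ ≤ ∑ j, ω (z.2 j) (z.1 j)
      · exact mul_le_mul_of_nonneg_left h (hT.1 z)
      · simp [hWdef, h]
  rw [← Real.log_le_iff_le_exp hp0]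
  have hC := four_pow_le_const (Fintype.card ι)
  have hC0 : (0 : ℝ) < (2 ^ Fintype.card ι) ^ 2 := by positivity
  have hmono := div_le_div_of_nonneg_left (by positivity : 0 ≤ (n : ℝ) * ν ^ 2) hC0 hC
  rw [← div_le_iff₀' hC0, Real.log_inv] at hmain
  linarith
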